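/- arXiv:1905.12412 — 2 statements merged into one kernel-verified Lean document; each statement's English description precedes it below -/
import Mathlib

section
/- Let x* ∈ X be a minimizer of ψ over X, i.e. ψ(x*) ≤ ψ(x) for all x ∈ X. Then for every x ∈ X: (1/m)·∑_{i=1}^m (1/(m·q_i))·‖∇f_i(x) − ∇f_i(x*)‖² ≤ 2·L_Q·[ψ(x) − ψ(x*)]. -/
open RealInnerProductSpace Finset

/-!
A convex function with `L`-Lipschitz gradient satisfies, with Bregman divergence
`D(x, y) = f x - f y - ⟪∇f y, x - y⟫`, the inequality `‖∇f x - ∇f y‖² ≤ 2 L D(x, y)`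
(`norm_grad_sub_sq_le`): compare the descent lemma (`descent`) at `x` with the supporting
hyperplane at `y` (`tangent_le`), both evaluated at the gradient step
`z = x - L⁻¹ (∇f x - ∇f y)`. Dividing by `m qᵢ` and using `Lᵢ / (m qᵢ) ≤ L_Q`, the average over `i`
is at most `2 L_Q` times the Bregman divergence of `F` between `x` and `x*`. That divergence is at
most `ψ x - ψ x*` by the first-order optimality condition `0 ≤ ⟪∇F x*, x - x*⟫ + h x - h x*`,
which follows from minimality of `x*` on the segment to `x`, convexity of `h` and the descent lemma.
-/

/-- A function affine in `t` that is nonnegative on `(0, 1]` is nonnegative at `0`; this replaces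
dividing by `t` and passing to the limit `t → 0`. -/
lemma nonneg_of_affine_nonneg {a c : ℝ} (H : ∀ t : ℝ, 0 < t → t ≤ 1 → 0 ≤ a + c * t) :
    0 ≤ a := by
  by_contra! ha
  have hd : 0 < |c| + |a| + 1 := by positivity
  -- At `t = |a| / (|c| + |a| + 1)` the linear term is strictly smaller than `|a|`.
  have ht := H (|a| / (|c| + |a| + 1)) (div_pos (abs_pos.2 ha.ne) hd)
    ((div_le_one hd).2 (by linarith [abs_nonneg c]))
  have h1 : c * (|a| / (|c| + |a| + 1)) < |a| := by
    rw [mul_div_assoc', div_lt_iff₀ hd]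
    nlinarith [le_abs_self c, abs_nonneg a, abs_pos.2 ha.ne, abs_nonneg c]
  rw [abs_of_neg ha] at h1 ht
  linarith

/-- The descent lemma; convexity is not needed, so it also applies to `-f`. -/
lemma descent {E : Type*} [NormedAddCommGroup E] [InnerProductSpace ℝ E] [CompleteSpace E]
    {f : E → ℝ} {g : E → E} {L : ℝ} (hdiff : ∀ x, HasGradientAt f (g x) x)
    (hlip : ∀ x y, ‖g x - g y‖ ≤ L * ‖x - y‖) (x d : E) :
    f (x + d) ≤ f x + ⟪g x, d⟫ + L / 2 * ‖d‖ ^ 2 := by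
  -- `φ` has derivative `⟪g (x + t d) - g x, d⟫ - L t ‖d‖² ≤ 0`, hence `φ 1 ≤ φ 0`.
  let φ : ℝ → ℝ := fun t => f (x + t • d) - t * ⟪g x, d⟫ - L / 2 * ‖d‖ ^ 2 * t ^ 2
  have hφ : ∀ t, HasDerivAt φ (⟪g (x + t • d), d⟫ - ⟪g x, d⟫ - L * ‖d‖ ^ 2 * t) t := by
    intro t
    have h1 : HasDerivAt (fun t : ℝ => x + t • d) d t := by
      simpa using ((hasDerivAt_id t).smul_const d).const_add x
    have h2 : HasDerivAt (fun t : ℝ => f (x + t • d)) ⟪g (x + t • d), d⟫ t := by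
      simpa [Function.comp_def] using (hdiff (x + t • d)).hasFDerivAt.comp_hasDerivAt t h1
    have h3 := (h2.sub ((hasDerivAt_id t).mul_const ⟪g x, d⟫)).sub
      ((hasDerivAt_pow 2 t).const_mul (L / 2 * ‖d‖ ^ 2))
    refine h3.congr_deriv ?_
    push_cast
    ring
  have hanti : AntitoneOn φ (Set.Icc 0 1) := by
    refine antitoneOn_of_deriv_nonpos (convex_Icc 0 1)
      (fun t _ => (hφ t).continuousAt.continuousWithinAt)
      (fun t _ => (hφ t).differentiableAt.differentiableWithinAt) fun t ht => ?_
    rw [interior_Icc] at ht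
    rw [(hφ t).deriv, ← inner_sub_left]
    have h1 := real_inner_le_norm (g (x + t • d) - g x) d
    have h2 := hlip (x + t • d) x
    rw [add_sub_cancel_left, norm_smul, Real.norm_of_nonneg ht.1.le] at h2
    nlinarith [mul_le_mul_of_nonneg_right h2 (norm_nonneg d)]
  have h01 := hanti (by simp) (by simp) (zero_le_one (α := ℝ))
  simp only [φ, one_smul, zero_smul, add_zero] at h01
  linarith

/-- A convex function lies above its tangent planes; a Lipschitz gradient is assumed so that the
first-order expansion comes from `descent` applied to `-f`. -/
lemma tangent_le {E : Type*} [NormedAddCommGroup E] [InnerProductSpace ℝ E] [CompleteSpace E]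
    {f : E → ℝ} {g : E → E} {L : ℝ} (hconv : ConvexOn ℝ Set.univ f)
    (hdiff : ∀ x, HasGradientAt f (g x) x)
    (hlip : ∀ x y, ‖g x - g y‖ ≤ L * ‖x - y‖) (x d : E) :
    f x + ⟪g x, d⟫ ≤ f (x + d) := by
  have hneg : ∀ x, HasGradientAt (fun y => -f y) (-g x) x := by
    intro x
    rw [hasGradientAt_iff_hasFDerivAt, map_neg]
    exact (hdiff x).hasFDerivAt.neg
  have hlip' : ∀ x y, ‖-g x - -g y‖ ≤ L * ‖x - y‖ := by
    intro x y
    rw [← neg_sub', norm_neg]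
    exact hlip x y
  suffices 0 ≤ f (x + d) - f x - ⟪g x, d⟫ by linarith
  refine nonneg_of_affine_nonneg (c := L / 2 * ‖d‖ ^ 2) fun t ht ht1 => ?_
  have h1 := descent hneg hlip' x (t • d)
  rw [inner_neg_left, real_inner_smul_right, norm_smul, Real.norm_of_nonneg ht.le] at h1
  have h2 := hconv.2 (Set.mem_univ x) (Set.mem_univ (x + d)) (sub_nonneg.2 ht1) ht.le (by ring)
  have h3 : (1 - t) • x + t • (x + d) = x + t • d := by module
  rw [h3, smul_eq_mul, smul_eq_mul] at h2
  refine nonneg_of_mul_nonneg_right ?_ ht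
  nlinarith

lemma norm_grad_sub_sq_le {E : Type*} [NormedAddCommGroup E] [InnerProductSpace ℝ E]
    [CompleteSpace E] {f : E → ℝ} {g : E → E} {L : ℝ} (hL : 0 < L)
    (hconv : ConvexOn ℝ Set.univ f) (hdiff : ∀ x, HasGradientAt f (g x) x)
    (hlip : ∀ x y, ‖g x - g y‖ ≤ L * ‖x - y‖) (x y : E) :
    ‖g x - g y‖ ^ 2 ≤ 2 * L * (f x - f y - ⟪g y, x - y⟫) := by
  have h1 := descent hdiff hlip x (-L⁻¹ • (g x - g y))
  have h2 := tangent_le hconv hdiff hlip y (x - y + -L⁻¹ • (g x - g y))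
  rw [← add_assoc, add_sub_cancel, inner_add_right, real_inner_smul_right] at h2
  rw [real_inner_smul_right, norm_smul, norm_neg, Real.norm_of_nonneg (inv_pos.2 hL).le,
    mul_pow] at h1
  have h3 : ⟪g x, g x - g y⟫ - ⟪g y, g x - g y⟫ = ‖g x - g y‖ ^ 2 := by
    rw [← inner_sub_left, real_inner_self_eq_norm_sq]
  have h4 : L / 2 * (L⁻¹ ^ 2 * ‖g x - g y‖ ^ 2) = L⁻¹ * ‖g x - g y‖ ^ 2 / 2 := by
    field_simp
  have h5 : L⁻¹ * ‖g x - g y‖ ^ 2 ≤ 2 * (f x - f y - ⟪g y, x - y⟫) := by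
    rw [h4] at h1
    have h6 := congrArg (L⁻¹ * ·) h3
    simp only [mul_sub] at h6
    linarith
  rw [inv_mul_le_iff₀ hL] at h5
  linarith

/-- Lemma `bound`: if `x*` minimizes `ψ = F + h` over the convex set `X`, then
`(1/m)·∑ᵢ (1/(m qᵢ))·‖∇fᵢ(x) − ∇fᵢ(x*)‖² ≤ 2·L_Q·(ψ(x) − ψ(x*))` for all `x ∈ X`. -/
theorem stmt2 {E : Type*} [NormedAddCommGroup E] [InnerProductSpace ℝ E] [CompleteSpace E]
    (m : ℕ) (hm : 0 < m)
    (f : Fin m → E → ℝ) (f' : Fin m → E → E) (Li : Fin m → ℝ) (q : Fin m → ℝ)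
    (hLipos : ∀ i, 0 < Li i)
    (hconv : ∀ i, ConvexOn ℝ Set.univ (f i))
    (hdiff : ∀ i x, HasGradientAt (f i) (f' i x) x)
    (hlip : ∀ i x y, ‖f' i x - f' i y‖ ≤ Li i * ‖x - y‖)
    (hq : ∀ i, 0 < q i) (hqsum : ∑ i, q i = 1)
    (F : E → ℝ) (F' : E → E)
    (hF : ∀ x, F x = (1 / (m : ℝ)) * ∑ i, f i x)
    (hF' : ∀ x, F' x = (1 / (m : ℝ)) • ∑ i, f' i x)
    (LQ : ℝ)
    (hLQ : LQ = (1 / (m : ℝ)) *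
      Finset.univ.sup' ⟨⟨0, hm⟩, Finset.mem_univ _⟩ (fun i => Li i / q i))
    (X : Set E) (hX : Convex ℝ X)
    (h : E → ℝ) (hh : ConvexOn ℝ Set.univ h)
    (ψ : E → ℝ) (hψ : ∀ x, ψ x = F x + h x)
    (xstar : E) (hxstar : xstar ∈ X)
    (hmin : ∀ x ∈ X, ψ xstar ≤ ψ x) :
    ∀ x ∈ X,
      (1 / (m : ℝ)) * ∑ i, (1 / ((m : ℝ) * q i)) * ‖f' i x - f' i xstar‖ ^ 2
        ≤ 2 * LQ * (ψ x - ψ xstar) := by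
  intro x hx
  have hm' : (0 : ℝ) < m := by exact_mod_cast hm
  have hterm : ∀ i, (1 / ((m : ℝ) * q i)) * ‖f' i x - f' i xstar‖ ^ 2
      ≤ 2 * LQ * (f i x - f i xstar - ⟪f' i xstar, x - xstar⟫) := by
    intro i
    have hc := norm_grad_sub_sq_le (hLipos i) (hconv i) (hdiff i) (hlip i) x xstar
    have hD : 0 ≤ f i x - f i xstar - ⟪f' i xstar, x - xstar⟫ := by
      have := tangent_le (hconv i) (hdiff i) (hlip i) xstar (x - xstar)
      rw [add_sub_cancel] at this
      linarith
    have hle : 1 / (m : ℝ) * (Li i / q i) ≤ LQ := by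
      rw [hLQ]
      exact mul_le_mul_of_nonneg_left
        (Finset.le_sup' (fun i => Li i / q i) (Finset.mem_univ i)) (by positivity)
    have hqi := hq i
    calc (1 / ((m : ℝ) * q i)) * ‖f' i x - f' i xstar‖ ^ 2
        ≤ (1 / ((m : ℝ) * q i)) *
            (2 * Li i * (f i x - f i xstar - ⟪f' i xstar, x - xstar⟫)) :=
          mul_le_mul_of_nonneg_left hc (by positivity)
      _ = 2 * (1 / (m : ℝ) * (Li i / q i)) *
            (f i x - f i xstar - ⟪f' i xstar, x - xstar⟫) := by
          field_simp
      _ ≤ _ := by gcongr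
  have hsum : (1 / (m : ℝ)) * ∑ i, (1 / ((m : ℝ) * q i)) * ‖f' i x - f' i xstar‖ ^ 2
      ≤ 2 * LQ * (F x - F xstar - ⟪F' xstar, x - xstar⟫) := by
    calc _ ≤ (1 / (m : ℝ)) *
          ∑ i, 2 * LQ * (f i x - f i xstar - ⟪f' i xstar, x - xstar⟫) :=
          mul_le_mul_of_nonneg_left (Finset.sum_le_sum fun i _ => hterm i) (by positivity)
      _ = _ := by
          rw [hF, hF, hF', real_inner_smul_left, sum_inner, ← Finset.mul_sum,
            Finset.sum_sub_distrib, Finset.sum_sub_distrib]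
          ring
  have hLQ0 : 0 ≤ LQ := by
    rw [hLQ]
    refine mul_nonneg (by positivity) ?_
    exact (div_pos (hLipos ⟨0, hm⟩) (hq ⟨0, hm⟩)).le.trans
      (Finset.le_sup' (fun i => Li i / q i) (Finset.mem_univ _))
  have hopt : 0 ≤ ⟪F' xstar, x - xstar⟫ + (h x - h xstar) := by
    refine nonneg_of_affine_nonneg
      (c := (1 / (m : ℝ)) * ∑ i, Li i / 2 * ‖x - xstar‖ ^ 2) fun t ht ht1 => ?_
    have hdesc : F (xstar + t • (x - xstar)) ≤ F xstar + t * ⟪F' xstar, x - xstar⟫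
        + t ^ 2 * ((1 / (m : ℝ)) * ∑ i, Li i / 2 * ‖x - xstar‖ ^ 2) := by
      calc F (xstar + t • (x - xstar))
          ≤ (1 / (m : ℝ)) * ∑ i, (f i xstar + t * ⟪f' i xstar, x - xstar⟫
              + t ^ 2 * (Li i / 2 * ‖x - xstar‖ ^ 2)) := by
            rw [hF]
            refine mul_le_mul_of_nonneg_left (Finset.sum_le_sum fun i _ => ?_) (by positivity)
            have h1 := descent (hdiff i) (hlip i) xstar (t • (x - xstar))
            rw [real_inner_smul_right, norm_smul, Real.norm_of_nonneg ht.le] at h1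
            linarith
        _ = _ := by
            rw [hF, hF', real_inner_smul_left, sum_inner, Finset.sum_add_distrib,
              Finset.sum_add_distrib, ← Finset.mul_sum, ← Finset.mul_sum]
            ring
    have hseg : (1 - t) • xstar + t • x = xstar + t • (x - xstar) := by module
    have hmem := hX hxstar hx (sub_nonneg.2 ht1) ht.le (by ring)
    have hh2 := hh.2 (Set.mem_univ xstar) (Set.mem_univ x) (sub_nonneg.2 ht1) ht.le (by ring)
    rw [hseg] at hmem hh2
    rw [smul_eq_mul, smul_eq_mul] at hh2
    have hmn := hmin _ hmem
    rw [hψ, hψ] at hmn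
    refine nonneg_of_mul_nonneg_right ?_ ht
    linarith
  refine hsum.trans (mul_le_mul_of_nonneg_left ?_ (by positivity))
  rw [hψ, hψ]
  linarith
end

section
/- One epoch of Varag with µ = 0: Let α ∈ (0,1], p ∈ [0,1] with α + p ≤ 1 and γ > 0 satisfy 1 − Lαγ > 0 and p ≥ (L_Q·αγ)/(1 − Lαγ), and let T ≥ 1 be an integer. Let x⁰, x̃ ∈ X. For each index tuple ι = (i₁,…,i_T) ∈ {1,…,m}^T, suppose points x_t(ι), x̄_t(ι) ∈ X for t = 0,…,T are given such that each of x_t(ι), x̄_t(ι) depends only on the first t coordinates of ι, and they satisfy: x₀(ι) = x⁰, x̄₀(ι) = x̃, and for t = 1,…,T, with x̲_t(ι) := (1 − α − p)·x̄_{t−1}(ι) + α·x_{t−1}(ι) + p·x̃ and G_t(ι) := (1/(m·q_{i_t}))·(∇f_{i_t}(x̲_t(ι)) − ∇f_{i_t}(x̃)) + ∇f(x̃), the point x_t(ι) minimizes x ↦ γ·[⟪G_t(ι), x⟫ + h(x)] + V(x_{t−1}(ι), x) over X, and x̄_t(ι) = (1 − α − p)·x̄_{t−1}(ι) + α·x_t(ι)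 + p·x̃. Set θ_t := γ(α + p)/α for 1 ≤ t ≤ T − 1 and θ_T := γ/α, let x̃⁺(ι) := (∑_{t=1}^T θ_t·x̄_t(ι))/(∑_{t=1}^T θ_t), Q(ι) := ∏_{t=1}^T q_{i_t}, ℒ := γ/α + (T − 1)·γ(α + p)/α, and ℛ := γ(1 − α)/α + (T − 1)·γp/α. Then for every x ∈ X: ℒ·∑_ι Q(ι)·(ψ(x̃⁺(ι)) − ψ(x)) ≤ ℛ·(ψ(x̃) − ψ(x)) + V(x⁰, x) − ∑_ι Q(ι)·V(x_T(ι), x), where the sums over ι range over all tuples in {1,…,m}^T. -/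
/-!
The proof follows the potential `(γ / α) * (ψ (x̄_t) - ψ x) + V (x_t) x` through the epoch.

For a fixed sample, smoothness of `F` at `xu`, convexity, and the three-point inequality for the
proximal step (`three_point`) give a one-step recursion (`one_step`) with two error terms coming
from the stochastic gradient: one linear in the error, the other quadratic. The linear one has
mean zero because the sampled index is independent of the past. The quadratic one is a variance,
which co-coercivity of each component gradient (`cocoercive`) bounds in expectation by `2 * LQ` times the
linearization gap `F xtil - F xu - ⟪F' xu, xtil - xu⟫`; the lower bound on `p` says exactly that
the gap, present with a negative sign in the recursion, absorbs it.

Conditional expectation over the `t`-th index is implemented by resampling one coordinate of the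
tuple (`sum_resample`). The resulting recursion on expectations telescopes (`telescope`), and
Jensen's inequality for `ψ` passes to the weighted average of the iterates.
-/

open RealInnerProductSpace Finset

/-! ### Gradients of convex and smooth functions -/

/-- One-sided derivative test: a function whose increments over `[0, 1]` from `0` are bounded by
the linear function `s * B` has slope at most `B` at `0`. -/
lemma deriv_le_of_le_linear {φ : ℝ → ℝ} {c B : ℝ} (hφ : HasDerivAt φ c 0)
    (hle : ∀ s, 0 < s → s ≤ 1 → φ s - φ 0 ≤ s * B) : c ≤ B := by
  have ht := hφ.tendsto_slope_zero_right
  refine le_of_tendsto ht ?_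
  filter_upwards [Ioc_mem_nhdsGT (show (0 : ℝ) < 1 by norm_num)] with s hs
  have h1 := hle s hs.1 hs.2
  rw [zero_add, smul_eq_mul, inv_mul_le_iff₀ hs.1]
  exact h1

section Gradient

variable {E : Type*} [NormedAddCommGroup E] [InnerProductSpace ℝ E] [CompleteSpace E]

lemma hasDerivAt_line {f : E → ℝ} {f' : E → E} (hd : ∀ x, HasGradientAt f (f' x) x)
    (x d : E) (s : ℝ) :
    HasDerivAt (fun s : ℝ => f (x + s • d)) ⟪f' (x + s • d), d⟫ s := by
  have h1 : HasDerivAt (fun s : ℝ => x + s • d) d s := by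
    simpa using ((hasDerivAt_id s).smul_const d).const_add x
  have h2 : HasDerivAt (fun s : ℝ => f (x + s • d)) _ s :=
    (hd (x + s • d)).hasFDerivAt.comp_hasDerivAt s h1
  exact h2.congr_deriv (by simp)

lemma convex_grad_le {f : E → ℝ} {f' : E → E} (hc : ConvexOn ℝ Set.univ f)
    (hd : ∀ x, HasGradientAt f (f' x) x) (x y : E) :
    f x + ⟪f' x, y - x⟫ ≤ f y := by
  have h1 := hasDerivAt_line hd x (y - x) 0
  have h2 := deriv_le_of_le_linear (B := f y - f x) h1 (by
    intro s hs hs1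
    have h3 := hc.2 (Set.mem_univ x) (Set.mem_univ y) (sub_nonneg.2 hs1) hs.le (by ring)
    have h4 : (1 - s) • x + s • y = x + s • (y - x) := by module
    rw [h4] at h3
    simp only [smul_eq_mul, zero_smul, add_zero] at h3 ⊢
    linarith)
  simp only [zero_smul, add_zero] at h2
  linarith

/-- The descent lemma: a function with `L`-Lipschitz gradient lies below its quadratic model. -/
lemma descent_s11 {f : E → ℝ} {f' : E → E} {L : ℝ}
    (hd : ∀ x, HasGradientAt f (f' x) x) (hl : ∀ x y, ‖f' x - f' y‖ ≤ L * ‖x - y‖) (x y : E) :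
    f y ≤ f x + ⟪f' x, y - x⟫ + L / 2 * ‖y - x‖ ^ 2 := by
  set d := y - x with hdd
  -- the gap between the function and its model decreases along the segment
  have hder : ∀ s : ℝ, HasDerivAt
      (fun s : ℝ => f (x + s • d) - s * ⟪f' x, d⟫ - L / 2 * ‖d‖ ^ 2 * s ^ 2)
      (⟪f' (x + s • d), d⟫ - ⟪f' x, d⟫ - L * ‖d‖ ^ 2 * s) s := by
    intro s
    have h1 := ((hasDerivAt_line hd x d s).sub ((hasDerivAt_id s).mul_const ⟪f' x, d⟫)).sub
      ((hasDerivAt_pow 2 s).const_mul (L / 2 * ‖d‖ ^ 2))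
    refine h1.congr_deriv ?_
    norm_num
    ring
  have hanti := antitoneOn_of_deriv_nonpos (convex_Icc (0 : ℝ) 1)
    (fun s _ => (hder s).continuousAt.continuousWithinAt)
    (fun s _ => (hder s).differentiableAt.differentiableWithinAt)
    (fun s hs => by
      rw [interior_Icc] at hs
      rw [(hder s).deriv]
      have h2 : ⟪f' (x + s • d) - f' x, d⟫ ≤ ‖f' (x + s • d) - f' x‖ * ‖d‖ :=
        real_inner_le_norm _ _
      have h3 := hl (x + s • d) x
      rw [add_sub_cancel_left, norm_smul, Real.norm_of_nonneg hs.1.le] at h3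
      have h4 := mul_le_mul_of_nonneg_right h3 (norm_nonneg d)
      rw [inner_sub_left] at h2
      nlinarith)
  have h5 := hanti (Set.left_mem_Icc.2 zero_le_one) (Set.right_mem_Icc.2 zero_le_one) zero_le_one
  have h6 : x + d = y := by rw [hdd]; abel
  simp only [one_smul, zero_smul, add_zero, h6] at h5
  linarith

/-- Co-coercivity: the Bregman divergence of a convex function with `L`-Lipschitz gradient
controls the squared difference of gradients. It comes from comparing the value at `y` with the
value after one gradient step of length `1 / L` on the divergence. -/
lemma cocoercive {f : E → ℝ} {f' : E → E} {L : ℝ} (hL : 0 < L)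
    (hc : ConvexOn ℝ Set.univ f) (hd : ∀ x, HasGradientAt f (f' x) x)
    (hl : ∀ x y, ‖f' x - f' y‖ ≤ L * ‖x - y‖) (x y : E) :
    ‖f' x - f' y‖ ^ 2 ≤ 2 * L * (f y - f x - ⟪f' x, y - x⟫) := by
  set g := f' x - f' y with hg
  have h1 := convex_grad_le hc hd x (y + L⁻¹ • g)
  have h2 := descent_s11 hd hl y (y + L⁻¹ • g)
  rw [add_sub_cancel_left, norm_smul, Real.norm_of_nonneg (inv_pos.2 hL).le, inner_smul_right]
    at h2
  have h3 : y + L⁻¹ • g - x = (y - x) + L⁻¹ • g := by abel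
  rw [h3, inner_add_right, inner_smul_right] at h1
  have h4 : ⟪f' x, g⟫ - ⟪f' y, g⟫ = ‖g‖ ^ 2 := by
    rw [← inner_sub_left, ← hg, real_inner_self_eq_norm_sq]
  have h5 : L / 2 * (L⁻¹ * ‖g‖) ^ 2 = L⁻¹ * ‖g‖ ^ 2 / 2 := by field_simp
  have h6 : L⁻¹ * ‖g‖ ^ 2 / 2 ≤ f y - f x - ⟪f' x, y - x⟫ := by
    have : L⁻¹ * ‖g‖ ^ 2 = L⁻¹ * ⟪f' x, g⟫ - L⁻¹ * ⟪f' y, g⟫ := by rw [← h4]; ring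
    linarith
  have h7 : ‖g‖ ^ 2 = 2 * L * (L⁻¹ * ‖g‖ ^ 2 / 2) := by field_simp
  rw [h7]
  exact mul_le_mul_of_nonneg_left h6 (by positivity)

/-- The three-point inequality for the Bregman proximal step: the first-order optimality
condition at the minimizer `b`, combined with the three-point identity
`V a x - V a b - V b x = ⟪w' b - w' a, x - b⟫`. -/
lemma three_point {X : Set E} (hX : Convex ℝ X) {h : E → ℝ} (hh : ConvexOn ℝ Set.univ h)
    {w : E → ℝ} {w' : E → E} (hw : ∀ x, HasGradientAt w (w' x) x)
    {V : E → E → ℝ} (hV : ∀ a b, V a b = w b - w a - ⟪w' a, b - a⟫)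
    {γ : ℝ} (hγ : 0 < γ) {G a b x : E} (hb : b ∈ X) (hx : x ∈ X)
    (hmin : ∀ y ∈ X, γ * (⟪G, b⟫ + h b) + V a b ≤ γ * (⟪G, y⟫ + h y) + V a y) :
    γ * (⟪G, b - x⟫ + h b - h x) ≤ V a x - V b x - V a b := by
  have hder : HasDerivAt (fun s : ℝ => -(w (b + s • (x - b)) - s * ⟪w' a, x - b⟫))
      (-(⟪w' (b + (0 : ℝ) • (x - b)), x - b⟫ - 1 * ⟪w' a, x - b⟫)) 0 :=
    ((hasDerivAt_line hw b (x - b) 0).sub ((hasDerivAt_id (0 : ℝ)).mul_const _)).neg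
  have key := deriv_le_of_le_linear (B := γ * (⟪G, x - b⟫ + h x - h b)) hder (by
    intro s hs hs1
    have e : (1 - s) • b + s • x = b + s • (x - b) := by module
    have hmem : b + s • (x - b) ∈ X := by
      rw [← e]
      exact hX hb hx (sub_nonneg.2 hs1) hs.le (by ring)
    have h1 := hmin _ hmem
    have h2 := hh.2 (Set.mem_univ b) (Set.mem_univ x) (sub_nonneg.2 hs1) hs.le (by ring)
    rw [e] at h2
    simp only [smul_eq_mul] at h2
    have h3 := mul_le_mul_of_nonneg_left h2 hγ.le
    have e2 : b + s • (x - b) - a = (b - a) + s • (x - b) := by abel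
    rw [hV, hV, e2] at h1
    simp only [inner_add_right, inner_smul_right] at h1
    simp only [zero_smul, add_zero]
    linarith)
  have e3 : x - a = (x - b) + (b - a) := by abel
  have e4 : b - x = -(x - b) := by abel
  simp only [zero_smul, add_zero] at key
  rw [hV, hV, hV, e3, e4, inner_neg_right, inner_add_right]
  linarith

end Gradient

/-! ### Variance and the one-step recursion -/

section InnerProduct

variable {E : Type*} [NormedAddCommGroup E] [InnerProductSpace ℝ E]

/-- The variance of a finitely supported random vector is at most its second moment. -/
lemma variance_le {m : ℕ} {q : Fin m → ℝ} (hqsum : ∑ i, q i = 1) (z : Fin m → E) (e : E)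
    (he : ∑ i, q i • z i = e) :
    ∑ i, q i * ‖z i - e‖ ^ 2 ≤ ∑ i, q i * ‖z i‖ ^ 2 := by
  have h1 : ∑ i, q i * ‖z i - e‖ ^ 2
      = ∑ i, q i * ‖z i‖ ^ 2 - 2 * ⟪∑ i, q i • z i, e⟫ + (∑ i, q i) * ‖e‖ ^ 2 := by
    rw [sum_inner, Finset.mul_sum, Finset.sum_mul, ← Finset.sum_sub_distrib,
      ← Finset.sum_add_distrib]
    refine Finset.sum_congr rfl fun i _ => ?_
    rw [norm_sub_sq_real, real_inner_smul_left]
    ring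
  rw [h1, he, hqsum, real_inner_self_eq_norm_sq]
  nlinarith [sq_nonneg ‖e‖]

/-- One iteration for a fixed sample. The stochastic gradient error `G - F' xu` enters through
a linear term, which has mean zero, and a quadratic term, which the divergence of `F` between
`xu` and the snapshot `xt` is meant to absorb. -/
lemma one_step {F h : E → ℝ} {F' : E → E} {L : ℝ}
    (hFc : ∀ x y, F x + ⟪F' x, y - x⟫ ≤ F y)
    (hFd : ∀ x y, F y ≤ F x + ⟪F' x, y - x⟫ + L / 2 * ‖y - x‖ ^ 2)
    (hh : ConvexOn ℝ Set.univ h) {α p γ : ℝ} (hα0 : 0 < α) (hp0 : 0 ≤ p) (hαp : α + p ≤ 1)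
    (hγ : 0 < γ) (hcond1 : 0 < 1 - L * α * γ) {a b xb xbn xu xt x G : E} {Vab Vax Vbx : ℝ}
    (hxu : xu = (1 - α - p) • xb + α • a + p • xt)
    (hxbn : xbn = (1 - α - p) • xb + α • b + p • xt)
    (h3 : γ * (⟪G, b - x⟫ + h b - h x) ≤ Vax - Vbx - Vab)
    (hVab : 1 / 2 * ‖b - a‖ ^ 2 ≤ Vab) :
    γ / α * (F xbn + h xbn - (F x + h x)) + Vbx
      ≤ γ / α * (1 - α - p) * (F xb + h xb - (F x + h x))
        + γ / α * p * (F xt + h xt - (F x + h x)) + Vax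
        - γ * ⟪G - F' xu, a - x⟫ + γ ^ 2 / (2 * (1 - L * α * γ)) * ‖G - F' xu‖ ^ 2
        - γ / α * p * (F xt - F xu - ⟪F' xu, xt - xu⟫) := by
  set K := 1 - L * α * γ with hK
  set δ := G - F' xu with hδ
  have hc : 0 < γ / α := div_pos hγ hα0
  have hr : 0 ≤ 1 - α - p := by linarith
  have e1 : xbn - xu = α • (b - a) := by rw [hxu, hxbn]; module
  have d1 := hFd xu xbn
  rw [e1, inner_smul_right, norm_smul, Real.norm_of_nonneg hα0.le] at d1
  have e2 : α • (b - a) = (1 - α - p) • (xb - xu) + α • (b - xu) + p • (xt - xu) := by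
    rw [← e1, hxbn]; module
  have i2 : α * ⟪F' xu, b - a⟫ = (1 - α - p) * ⟪F' xu, xb - xu⟫ + α * ⟪F' xu, b - xu⟫
      + p * ⟪F' xu, xt - xu⟫ := by
    rw [← inner_smul_right, e2]
    simp only [inner_add_right, inner_smul_right]
  have i3 : ⟪F' xu, b - xu⟫ = ⟪F' xu, x - xu⟫ + ⟪G, b - x⟫ - ⟪δ, b - a⟫ - ⟪δ, a - x⟫ := by
    rw [hδ]
    simp only [inner_sub_left, inner_sub_right]
    ring
  have hh1 : h xbn ≤ (1 - α - p) * h xb + α * h b + p * h xt := by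
    have := hh.map_sum_le (t := (Finset.univ : Finset (Fin 3))) (w := ![1 - α - p, α, p])
      (p := ![xb, b, xt]) (by intro i _; fin_cases i <;> simp <;> linarith)
      (by simp [Fin.sum_univ_three]; ring) (by simp)
    simpa [Fin.sum_univ_three, hxbn] using this
  have c1 := mul_le_mul_of_nonneg_left (hFc xu xb) hr
  have c2 := mul_le_mul_of_nonneg_left (hFc xu x) hα0.le
  -- Young's inequality, using the curvature left over after the smoothness term
  have young : -(γ * ⟪δ, b - a⟫) ≤ K / 2 * ‖b - a‖ ^ 2 + γ ^ 2 / (2 * K) * ‖δ‖ ^ 2 := by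
    have y1 : -⟪δ, b - a⟫ ≤ ‖δ‖ * ‖b - a‖ := by
      have := abs_real_inner_le_norm δ (b - a)
      linarith [neg_abs_le ⟪δ, b - a⟫]
    have y2 : K / 2 * ‖b - a‖ ^ 2 + γ ^ 2 / (2 * K) * ‖δ‖ ^ 2 - γ * (‖δ‖ * ‖b - a‖)
        = (K * ‖b - a‖ - γ * ‖δ‖) ^ 2 / (2 * K) := by
      field_simp
      ring
    have y3 : 0 ≤ (K * ‖b - a‖ - γ * ‖δ‖) ^ 2 / (2 * K) := by positivity
    have y4 := mul_le_mul_of_nonneg_left y1 hγ.le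
    linarith
  have tot : F xbn + h xbn - (F x + h x) ≤ (1 - α - p) * (F xb + h xb - (F x + h x))
      + p * (F xt + h xt - (F x + h x)) - p * (F xt - F xu - ⟪F' xu, xt - xu⟫)
      + α * (⟪G, b - x⟫ + h b - h x - ⟪δ, b - a⟫ - ⟪δ, a - x⟫)
      + L / 2 * (α * ‖b - a‖) ^ 2 := by
    rw [i2, i3] at d1
    linarith
  have tot2 := mul_le_mul_of_nonneg_left tot hc.le
  have e5 : γ / α * (L / 2 * (α * ‖b - a‖) ^ 2) = (1 - K) / 2 * ‖b - a‖ ^ 2 := by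
    rw [hK]; field_simp; ring
  have e6 : ∀ r : ℝ, γ / α * (α * r) = γ * r := by intro r; field_simp
  simp only [mul_add (γ / α), mul_sub (γ / α) ((1 - α - p) * _ + _), e5, e6] at tot2 ⊢
  linarith

end InnerProduct

/-! ### Expectation over index tuples and telescoping -/

/-- Averaging over all tuples is unchanged when coordinate `t` is first resampled
independently: `(ι, i) ↦ (update ι t i, ι t)` is a weight-preserving involution. -/
lemma sum_resample {m T : ℕ} {q : Fin m → ℝ} (hqsum : ∑ i, q i = 1) (t : Fin T)
    (g : (Fin T → Fin m) → ℝ) :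
    ∑ ι : Fin T → Fin m, (∏ s, q (ι s)) * g ι
      = ∑ ι : Fin T → Fin m, (∏ s, q (ι s)) * ∑ i, q i * g (Function.update ι t i) := by
  have h1 : ∑ ι : Fin T → Fin m, (∏ s, q (ι s)) * g ι
      = ∑ y : (Fin T → Fin m) × Fin m, (∏ s, q (y.1 s)) * q y.2 * g y.1 := by
    rw [Fintype.sum_prod_type]
    refine Finset.sum_congr rfl fun ι _ => ?_
    simp only
    rw [← Finset.sum_mul, ← Finset.mul_sum, hqsum, mul_one]
  have h2 : ∑ ι : Fin T → Fin m, (∏ s, q (ι s)) * ∑ i, q i * g (Function.update ι t i)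
      = ∑ y : (Fin T → Fin m) × Fin m,
        (∏ s, q (y.1 s)) * q y.2 * g (Function.update y.1 t y.2) := by
    rw [Fintype.sum_prod_type]
    refine Finset.sum_congr rfl fun ι _ => ?_
    rw [Finset.mul_sum]
    exact Finset.sum_congr rfl fun i _ => by ring
  have hinv : ∀ y : (Fin T → Fin m) × Fin m,
      (Function.update (Function.update y.1 t y.2) t (y.1 t),
        (Function.update y.1 t y.2) t) = y := by
    intro y
    simp
  rw [h1, h2]
  refine Finset.sum_nbij' (fun y => (Function.update y.1 t y.2, y.1 t))
    (fun y => (Function.update y.1 t y.2, y.1 t)) (by simp) (by simp)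
    (fun y _ => hinv y) (fun y _ => hinv y) ?_
  intro y _
  simp only [Function.update_idem, Function.update_eq_self]
  congr 1
  rw [← Finset.mul_prod_erase univ (fun s => q (y.1 s)) (Finset.mem_univ t),
    ← Finset.mul_prod_erase univ (fun s => q (Function.update y.1 t y.2 s)) (Finset.mem_univ t)]
  have : ∏ s ∈ univ.erase t, q (Function.update y.1 t y.2 s) = ∏ s ∈ univ.erase t, q (y.1 s) :=
    Finset.prod_congr rfl fun s hs => by
      rw [Function.update_of_ne (Finset.ne_of_mem_erase hs)]
  rw [this, Function.update_self]
  ring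

/-- Summing the one-iteration recursion over an epoch: `D t` and `W t` are the expected
optimality gap and Bregman distance after `t` iterations. -/
lemma telescope {D W : ℕ → ℝ} {c α p : ℝ} {T : ℕ}
    (hstep : ∀ t, t < T → c * D (t + 1) + W (t + 1)
      ≤ c * (1 - α - p) * D t + c * p * D 0 + W t) :
    ∀ n, n < T → c * D (n + 1) + ∑ t ∈ Finset.range n, c * (α + p) * D (t + 1) + W (n + 1)
      ≤ (c * (1 - α) + n * (c * p)) * D 0 + W 0 := by
  intro n
  induction n with
  | zero =>
    intro h0
    have := hstep 0 h0
    simp only [Finset.range_zero, Finset.sum_empty, Nat.cast_zero]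
    linarith
  | succ n ih =>
    intro hn
    have h1 := ih (by omega)
    have h2 := hstep (n + 1) hn
    rw [Finset.sum_range_succ]
    push_cast
    linarith


/-! ### The epoch bound -/

/-- Lemma `lem:deter_smooth_one_epoch` (one epoch of Varag with `µ = 0`): the expected
decrease of the objective after one epoch, where the expectation over the i.i.d. random
indices `i₁, …, i_T` (drawn with probabilities `q`) is written as a weighted sum over all
index tuples `ι : Fin T → Fin m` with weights `Q ι = ∏ₜ q (ι t)`. -/
theorem stmt11 {E : Type*} [NormedAddCommGroup E] [InnerProductSpace ℝ E] [CompleteSpace E]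
    (m : ℕ) (hm : 0 < m)
    (f : Fin m → E → ℝ) (f' : Fin m → E → E) (Li : Fin m → ℝ) (q : Fin m → ℝ)
    (hLipos : ∀ i, 0 < Li i)
    (hconv : ∀ i, ConvexOn ℝ Set.univ (f i))
    (hdiff : ∀ i x, HasGradientAt (f i) (f' i x) x)
    (hlip : ∀ i x y, ‖f' i x - f' i y‖ ≤ Li i * ‖x - y‖)
    (hq : ∀ i, 0 < q i) (hqsum : ∑ i, q i = 1)
    (F : E → ℝ) (F' : E → E)
    (hF : ∀ x, F x = (1 / (m : ℝ)) * ∑ i, f i x)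
    (hF' : ∀ x, F' x = (1 / (m : ℝ)) • ∑ i, f' i x)
    (L LQ : ℝ)
    (hLdef : L = (1 / (m : ℝ)) * ∑ i, Li i)
    (hLQ : LQ = (1 / (m : ℝ)) *
      Finset.univ.sup' ⟨⟨0, hm⟩, Finset.mem_univ _⟩ (fun i => Li i / q i))
    (X : Set E) (hX : Convex ℝ X)
    (h : E → ℝ) (hh : ConvexOn ℝ Set.univ h)
    (ψ : E → ℝ) (hψ : ∀ x, ψ x = F x + h x)
    (w : E → ℝ) (w' : E → E)
    (hwconv : ConvexOn ℝ Set.univ w)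
    (hw : ∀ x, HasGradientAt w (w' x) x)
    (V : E → E → ℝ) (hV : ∀ a b, V a b = w b - w a - ⟪w' a, b - a⟫)
    (hVsc : ∀ a b, V a b ≥ 1 / 2 * ‖b - a‖ ^ 2)
    (α p γ : ℝ) (hα0 : 0 < α) (hα1 : α ≤ 1) (hp0 : 0 ≤ p) (hp1 : p ≤ 1)
    (hαp : α + p ≤ 1) (hγ : 0 < γ)
    (hcond1 : 0 < 1 - L * α * γ)
    (hcond2 : LQ * α * γ / (1 - L * α * γ) ≤ p)
    (T : ℕ) (hT : 1 ≤ T)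
    (x0 xtil : E) (hx0 : x0 ∈ X) (hxtil : xtil ∈ X)
    -- trajectories indexed by the tuple of random indices; `xs ι t` is `x_t`,
    -- `xb ι t` is `x̄_t`
    (xs xb : (Fin T → Fin m) → ℕ → E)
    (hmem : ∀ ι t, t ≤ T → xs ι t ∈ X ∧ xb ι t ∈ X)
    -- `x_t` and `x̄_t` depend only on the first `t` coordinates of `ι`
    (hadapt : ∀ ι ι' t, t ≤ T → (∀ j : Fin T, (j : ℕ) < t → ι j = ι' j) →
      xs ι t = xs ι' t ∧ xb ι t = xb ι' t)
    (hinit : ∀ ι, xs ι 0 = x0 ∧ xb ι 0 = xtil)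
    (xu : (Fin T → Fin m) → Fin T → E)
    (hxu : ∀ ι (t : Fin T),
      xu ι t = (1 - α - p) • xb ι (t : ℕ) + α • xs ι (t : ℕ) + p • xtil)
    (G : (Fin T → Fin m) → Fin T → E)
    (hG : ∀ ι (t : Fin T), G ι t =
      (1 / ((m : ℝ) * q (ι t))) • (f' (ι t) (xu ι t) - f' (ι t) xtil) + F' xtil)
    (hmin : ∀ ι (t : Fin T), ∀ x ∈ X,
      γ * (⟪G ι t, xs ι ((t : ℕ) + 1)⟫ + h (xs ι ((t : ℕ) + 1)))
          + V (xs ι (t : ℕ)) (xs ι ((t : ℕ) + 1))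
        ≤ γ * (⟪G ι t, x⟫ + h x) + V (xs ι (t : ℕ)) x)
    (hxb : ∀ ι (t : Fin T),
      xb ι ((t : ℕ) + 1) = (1 - α - p) • xb ι (t : ℕ) + α • xs ι ((t : ℕ) + 1) + p • xtil)
    (θ : ℕ → ℝ)
    (hθ : ∀ t, 1 ≤ t → t ≤ T - 1 → θ t = γ * (α + p) / α)
    (hθT : θ T = γ / α)
    (xtplus : (Fin T → Fin m) → E)
    (hxtplus : ∀ ι, xtplus ι =
      (∑ t ∈ Finset.Icc 1 T, θ t)⁻¹ • ∑ t ∈ Finset.Icc 1 T, θ t • xb ι t)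
    (Q : (Fin T → Fin m) → ℝ) (hQ : ∀ ι, Q ι = ∏ t, q (ι t))
    (LL RR : ℝ)
    (hLL : LL = γ / α + ((T : ℝ) - 1) * γ * (α + p) / α)
    (hRR : RR = γ * (1 - α) / α + ((T : ℝ) - 1) * γ * p / α) :
    ∀ x ∈ X,
      LL * ∑ ι : Fin T → Fin m, Q ι * (ψ (xtplus ι) - ψ x)
        ≤ RR * (ψ xtil - ψ x) + V x0 x
          - ∑ ι : Fin T → Fin m, Q ι * V (xs ι T) x := by
  intro x hx
  have hm' : (0 : ℝ) < m := by exact_mod_cast hm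
  set K := 1 - L * α * γ with hK
  have hc : 0 < γ / α := div_pos hγ hα0
  -- smoothness and convexity of the average
  have hFinner : ∀ a b, ⟪F' a, b⟫ = (1 / (m : ℝ)) * ∑ i, ⟪f' i a, b⟫ := by
    intro a b
    rw [hF', real_inner_smul_left, sum_inner]
  have hFd : ∀ a b, F b ≤ F a + ⟪F' a, b - a⟫ + L / 2 * ‖b - a‖ ^ 2 := by
    intro a b
    have h1 : ∑ i, f i b ≤ ∑ i, (f i a + ⟪f' i a, b - a⟫ + Li i / 2 * ‖b - a‖ ^ 2) :=
      Finset.sum_le_sum fun i _ => descent_s11 (hdiff i) (hlip i) a b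
    rw [Finset.sum_add_distrib, Finset.sum_add_distrib, ← Finset.sum_mul, ← Finset.sum_div] at h1
    have h2 := mul_le_mul_of_nonneg_left h1 (one_div_pos.2 hm').le
    rw [hF, hF, hFinner, hLdef]
    linarith
  have hFc : ∀ a b, F a + ⟪F' a, b - a⟫ ≤ F b := by
    intro a b
    have h1 : ∑ i, (f i a + ⟪f' i a, b - a⟫) ≤ ∑ i, f i b :=
      Finset.sum_le_sum fun i _ => convex_grad_le (hconv i) (hdiff i) a b
    rw [Finset.sum_add_distrib] at h1
    have h2 := mul_le_mul_of_nonneg_left h1 (one_div_pos.2 hm').le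
    rw [hF, hF, hFinner]
    linarith
  -- importance sampling is unbiased
  have hmean : ∀ u v, ∑ i, q i • ((1 / ((m : ℝ) * q i)) • (f' i u - f' i v)) = F' u - F' v := by
    intro u v
    rw [hF', hF', ← smul_sub, ← Finset.sum_sub_distrib, Finset.smul_sum]
    refine Finset.sum_congr rfl fun i _ => ?_
    rw [smul_smul]
    congr 1
    have := (hq i).ne'
    field_simp
  have hLi : ∀ i, Li i / (m * q i) ≤ LQ := by
    intro i
    have h1 := Finset.le_sup' (fun i => Li i / q i) (Finset.mem_univ i)
    have h2 := mul_le_mul_of_nonneg_left h1 (one_div_pos.2 hm').le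
    rw [hLQ]
    refine le_trans (le_of_eq ?_) h2
    have := (hq i).ne'
    field_simp
  have hvar : ∀ u v, ∑ i, q i * ‖(1 / ((m : ℝ) * q i)) • (f' i u - f' i v) - (F' u - F' v)‖ ^ 2
      ≤ 2 * LQ * (F v - F u - ⟪F' u, v - u⟫) := by
    intro u v
    refine (variance_le hqsum _ _ (hmean u v)).trans ?_
    have e : 2 * LQ * (F v - F u - ⟪F' u, v - u⟫)
        = ∑ i, LQ * (2 / m * (f i v - f i u - ⟪f' i u, v - u⟫)) := by
      rw [← Finset.mul_sum, ← Finset.mul_sum, Finset.sum_sub_distrib, Finset.sum_sub_distrib,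
        hF, hF, hFinner]
      ring
    rw [e]
    refine Finset.sum_le_sum fun i _ => ?_
    have hqi := hq i
    have h1 := cocoercive (hLipos i) (hconv i) (hdiff i) (hlip i) u v
    have h2 := convex_grad_le (hconv i) (hdiff i) u v
    have h3 : 0 ≤ 2 / (m : ℝ) * (f i v - f i u - ⟪f' i u, v - u⟫) :=
      mul_nonneg (by positivity) (by linarith)
    refine le_trans ?_ (mul_le_mul_of_nonneg_right (hLi i) h3)
    rw [norm_smul, Real.norm_of_nonneg (by positivity)]
    have h4 : q i * (1 / ((m : ℝ) * q i) * ‖f' i u - f' i v‖) ^ 2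
        = (1 / ((m : ℝ) ^ 2 * q i)) * ‖f' i u - f' i v‖ ^ 2 := by field_simp
    rw [h4]
    refine (mul_le_mul_of_nonneg_left h1 (by positivity)).trans (le_of_eq ?_)
    field_simp
  have hQpos : ∀ ι, 0 ≤ Q ι := fun ι => by
    rw [hQ]
    exact Finset.prod_nonneg fun s _ => (hq _).le
  have hQsum : ∑ ι, Q ι = 1 := by
    simp only [hQ]
    rw [← Fintype.piFinset_univ, ← Finset.prod_univ_sum]
    simp [hqsum]
  set D : ℕ → ℝ := fun t => ∑ ι, Q ι * (ψ (xb ι t) - ψ x) with hD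
  set W : ℕ → ℝ := fun t => ∑ ι, Q ι * V (xs ι t) x with hW
  have hD0 : D 0 = ψ xtil - ψ x := by
    simp only [hD, (hinit _).2]
    rw [← Finset.sum_mul, hQsum, one_mul]
  have hW0 : W 0 = V x0 x := by
    simp only [hW, (hinit _).1]
    rw [← Finset.sum_mul, hQsum, one_mul]
  have hstep : ∀ t, t < T → γ / α * D (t + 1) + W (t + 1)
      ≤ γ / α * (1 - α - p) * D t + γ / α * p * D 0 + W t := by
    intro t ht
    set Z : (Fin T → Fin m) → ℝ := fun ι =>
      γ / α * (ψ (xb ι (t + 1)) - ψ x) + V (xs ι (t + 1)) x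
        - (γ / α * (1 - α - p) * (ψ (xb ι t) - ψ x) + γ / α * p * (ψ xtil - ψ x)
          + V (xs ι t) x) with hZ
    have hZsum : ∑ ι, Q ι * Z ι = γ / α * D (t + 1) + W (t + 1)
        - (γ / α * (1 - α - p) * D t + γ / α * p * D 0 + W t) := by
      have e0 : γ / α * p * D 0 = ∑ ι, Q ι * (γ / α * p * (ψ xtil - ψ x)) := by
        rw [← Finset.sum_mul, hQsum, hD0, one_mul]
      rw [e0]
      simp only [hD, hW, Finset.mul_sum]
      rw [← Finset.sum_add_distrib, ← Finset.sum_add_distrib, ← Finset.sum_add_distrib,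
        ← Finset.sum_sub_distrib]
      exact Finset.sum_congr rfl fun ι _ => by simp only [hZ]; ring
    suffices hs : ∑ ι, Q ι * Z ι ≤ 0 by linarith
    have hre := sum_resample hqsum ⟨t, ht⟩ Z
    simp only [← hQ] at hre
    rw [hre]
    refine Finset.sum_nonpos fun ι _ => mul_nonpos_of_nonneg_of_nonpos (hQpos ι) ?_
    -- the state before iteration `t + 1` does not see the resampled coordinate
    have had : ∀ i, xs (Function.update ι ⟨t, ht⟩ i) t = xs ι t ∧
        xb (Function.update ι ⟨t, ht⟩ i) t = xb ι t := fun i =>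
      hadapt _ _ t ht.le fun j hj =>
        Function.update_of_ne (fun hjt => by rw [hjt] at hj; exact lt_irrefl _ hj) _ _
    set u := xu ι ⟨t, ht⟩ with hu
    have hui : ∀ i, xu (Function.update ι ⟨t, ht⟩ i) ⟨t, ht⟩ = u := fun i => by
      rw [hu, hxu, hxu, (had i).1, (had i).2]
    set ε : Fin m → E := fun i =>
      (1 / ((m : ℝ) * q i)) • (f' i u - f' i xtil) - (F' u - F' xtil) with hε
    set B := F xtil - F u - ⟪F' u, xtil - u⟫ with hB
    have hZi : ∀ i, Z (Function.update ι ⟨t, ht⟩ i) ≤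
        -(γ * ⟪ε i, xs ι t - x⟫) + γ ^ 2 / (2 * K) * ‖ε i‖ ^ 2 - γ / α * p * B := by
      intro i
      have hGi : G (Function.update ι ⟨t, ht⟩ i) ⟨t, ht⟩ - F' u = ε i := by
        rw [hG, hui, Function.update_self]
        simp only [hε]
        abel
      have h3 := three_point hX hh hw hV hγ (hmem (Function.update ι ⟨t, ht⟩ i) (t + 1) ht).1 hx
        (hmin (Function.update ι ⟨t, ht⟩ i) ⟨t, ht⟩)
      have h1 := one_step hFc hFd hh hα0 hp0 hαp hγ hcond1
        (hxu (Function.update ι ⟨t, ht⟩ i) ⟨t, ht⟩) (hxb (Function.update ι ⟨t, ht⟩ i) ⟨t, ht⟩)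
        h3 (hVsc _ _)
      rw [hui] at h1
      simp only [(had i).1, (had i).2] at h1
      rw [hGi] at h1
      simp only [hZ, hψ, (had i).1, (had i).2]
      linarith
    have hlin : ∑ i, q i * ⟪ε i, xs ι t - x⟫ = 0 := by
      have : ∑ i, q i • ε i = 0 := by
        simp only [hε, smul_sub (q _) (_ • _)]
        rw [Finset.sum_sub_distrib, hmean, ← Finset.sum_smul, hqsum, one_smul, sub_self]
      simp only [← real_inner_smul_left]
      rw [← sum_inner, this, inner_zero_left]
    have hB0 : 0 ≤ B := by
      have := hFc u xtil
      rw [hB]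
      linarith
    have hquad := hvar u xtil
    calc ∑ i, q i * Z (Function.update ι ⟨t, ht⟩ i)
        ≤ ∑ i, q i * (-(γ * ⟪ε i, xs ι t - x⟫) + γ ^ 2 / (2 * K) * ‖ε i‖ ^ 2
            - γ / α * p * B) :=
          Finset.sum_le_sum fun i _ => mul_le_mul_of_nonneg_left (hZi i) (hq i).le
      _ = -γ * (∑ i, q i * ⟪ε i, xs ι t - x⟫) + γ ^ 2 / (2 * K) * (∑ i, q i * ‖ε i‖ ^ 2)
            - (∑ i, q i) * (γ / α * p * B) := by
          rw [Finset.mul_sum, Finset.mul_sum, Finset.sum_mul, ← Finset.sum_add_distrib,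
            ← Finset.sum_sub_distrib]
          exact Finset.sum_congr rfl fun i _ => by ring
      _ ≤ γ ^ 2 / (2 * K) * (2 * LQ * B) - γ / α * p * B := by
          rw [hlin, hqsum]
          have := mul_le_mul_of_nonneg_left hquad (show 0 ≤ γ ^ 2 / (2 * K) by positivity)
          linarith
      _ = γ / α * (LQ * α * γ / K - p) * B := by field_simp
      _ ≤ 0 := mul_nonpos_of_nonpos_of_nonneg
          (mul_nonpos_of_nonneg_of_nonpos hc.le (by linarith)) hB0
  obtain ⟨n, rfl⟩ : ∃ n, T = n + 1 := ⟨T - 1, by omega⟩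
  have htel := telescope hstep n (Nat.lt_succ_self n)
  rw [hD0, hW0] at htel
  -- the weights `θ` are constant except for the last one
  have hθsum : ∀ g : ℕ → ℝ, ∑ t ∈ Finset.Icc 1 (n + 1), θ t * g t
      = γ / α * g (n + 1) + ∑ t ∈ Finset.range n, γ / α * (α + p) * g (t + 1) := by
    intro g
    have e : Finset.Icc 1 n = Finset.Ico (0 + 1) (n + 1) := by
      ext t
      simp only [Finset.mem_Icc, Finset.mem_Ico]
      omega
    rw [Finset.sum_Icc_succ_top (by omega), hθT, add_comm, e,
      ← Finset.sum_Ico_add' (fun t => θ t * g t), ← Finset.range_eq_Ico]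
    congr 1
    refine Finset.sum_congr rfl fun t ht => ?_
    rw [Finset.mem_range] at ht
    rw [hθ (t + 1) (by omega) (by omega)]
    ring
  have hθLL : ∑ t ∈ Finset.Icc 1 (n + 1), θ t = LL := by
    have := hθsum fun _ => 1
    simp only [mul_one, Finset.sum_const, Finset.card_range, nsmul_eq_mul] at this
    rw [this, hLL]
    push_cast
    ring
  have hLLpos : 0 < LL := by
    have : 0 ≤ (n : ℝ) * (γ / α * (α + p)) := by positivity
    rw [hLL]
    push_cast
    have e : γ / α + ((n : ℝ) + 1 - 1) * γ * (α + p) / α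
        = γ / α + (n : ℝ) * (γ / α * (α + p)) := by ring
    rw [e]
    linarith
  have hθnn : ∀ t ∈ Finset.Icc 1 (n + 1), 0 ≤ θ t := by
    intro t ht
    rw [Finset.mem_Icc] at ht
    rcases eq_or_lt_of_le ht.2 with e | e
    · rw [e, hθT]
      exact hc.le
    · rw [hθ t ht.1 (by omega)]
      positivity
  have hψc : ConvexOn ℝ Set.univ ψ := by
    have hFconv : ConvexOn ℝ Set.univ F := by
      refine ⟨convex_univ, fun a _ b _ s r hs hr hsr => ?_⟩
      have g1 := mul_le_mul_of_nonneg_left (hFc (s • a + r • b) a) hs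
      have g2 := mul_le_mul_of_nonneg_left (hFc (s • a + r • b) b) hr
      have e : s * ⟪F' (s • a + r • b), a - (s • a + r • b)⟫
          + r * ⟪F' (s • a + r • b), b - (s • a + r • b)⟫ = 0 := by
        rw [← inner_smul_right, ← inner_smul_right, ← inner_add_right]
        have : s • (a - (s • a + r • b)) + r • (b - (s • a + r • b)) = 0 := by
          obtain rfl : s = 1 - r := by linarith
          module
        rw [this, inner_zero_right]
      have e2 : F (s • a + r • b) = s * F (s • a + r • b) + r * F (s • a + r • b) := by
        rw [← add_mul, hsr, one_mul]
      simp only [smul_eq_mul]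
      linarith
    have : ψ = F + h := funext hψ
    rw [this]
    exact hFconv.add hh
  have hjensen : ∀ ι, LL * (ψ (xtplus ι) - ψ x)
      ≤ ∑ t ∈ Finset.Icc 1 (n + 1), θ t * (ψ (xb ι t) - ψ x) := by
    intro ι
    have h1 := hψc.map_centerMass_le hθnn (by rw [hθLL]; exact hLLpos)
      (p := fun t => xb ι t) (fun _ _ => Set.mem_univ _)
    simp only [Finset.centerMass, ← hxtplus, smul_eq_mul] at h1
    rw [hθLL, le_inv_mul_iff₀ hLLpos] at h1
    simp only [mul_sub]
    rw [Finset.sum_sub_distrib, ← Finset.sum_mul, hθLL]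
    simp only [Function.comp] at h1
    linarith
  have hfin : LL * ∑ ι, Q ι * (ψ (xtplus ι) - ψ x)
      ≤ γ / α * D (n + 1) + ∑ t ∈ Finset.range n, γ / α * (α + p) * D (t + 1) := by
    rw [← hθsum D]
    simp only [hD, Finset.mul_sum]
    rw [Finset.sum_comm]
    refine Finset.sum_le_sum fun ι _ => ?_
    have h1 := mul_le_mul_of_nonneg_left (hjensen ι) (hQpos ι)
    rw [Finset.mul_sum] at h1
    calc LL * (Q ι * (ψ (xtplus ι) - ψ x)) = Q ι * (LL * (ψ (xtplus ι) - ψ x)) := by ring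
      _ ≤ _ := h1
      _ = _ := Finset.sum_congr rfl fun t _ => by ring
  have hRR' : RR = γ / α * (1 - α) + n * (γ / α * p) := by
    rw [hRR]
    push_cast
    ring
  rw [hRR']
  linarith
end
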